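/- With the stated setup, J_α(h₀) = A(ker α) + ℓ_{t_α}·ℂ[X₁,…,Xₙ]; in particular J_α(h₀) admits this description independent of h₀. -/

import Mathlib

/-!
Since `B t h₀ = α h₀ = 1` and both `t` and `h₀` are isotropic, they span a hyperbolic plane, and
`ℂⁿ = ℂ h₀ ⊕ ℂ t ⊕ W` with `W = {v | B v h₀ = 0 ∧ B v t = 0}` and `ker α = ℂ t ⊕ W`. On the level
of polynomials the first decomposition shows that the products `ℓ_{h₀}^k ℓ_t^l s`, `s ∈ A(W)`, with
no condition on `k, l`, span the whole ring (`mem_span_products`), so that `ℓ_t ℂ[X] ⊆ J_α(h₀)`; the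
second one gives `A(ker α) ⊆ A(W) + ℓ_t ℂ[X]` (`exists_of_mem_algOf_ker`). Together they give the
inclusion `⊇`. Conversely, a generator of `J_α(h₀)` either is divisible by `ℓ_t` or has `k = l = 0`
and so lies in `A(W) ⊆ A(ker α)`.
-/

open MvPolynomial

/-- The linear polynomial `ℓ_v = Σᵢ vᵢ Xᵢ` associated with a vector `v ∈ ℂⁿ`;
this realises the identification of the symmetric algebra of `ℂⁿ` with
`ℂ[X₁, …, Xₙ]`. -/
noncomputable def linPoly {n : ℕ} (v : Fin n → ℂ) : MvPolynomial (Fin n) ℂ :=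
  ∑ i : Fin n, MvPolynomial.C (v i) * MvPolynomial.X i

/-- Evaluation of a polynomial at a linear functional `μ ∈ (ℂⁿ)*`, substituting
`Xᵢ ↦ μ(eᵢ)`. -/
noncomputable def evalFun {n : ℕ} (μ : (Fin n → ℂ) →ₗ[ℂ] ℂ)
    (f : MvPolynomial (Fin n) ℂ) : ℂ :=
  MvPolynomial.eval (fun i => μ (Pi.single i 1)) f

/-- `A(W)`: the `ℂ`-subalgebra of `ℂ[X₁, …, Xₙ]` generated by the linear
polynomials `ℓ_v`, `v ∈ W`. -/
noncomputable def algOf {n : ℕ} (W : Set (Fin n → ℂ)) :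
    Subalgebra ℂ (MvPolynomial (Fin n) ℂ) :=
  Algebra.adjoin ℂ (linPoly '' W)

/-- `J_α(h₀)`: the `ℂ`-linear span of all products `ℓ_{h₀}^k · ℓ_{t_α}^l · s`
with `k, l ∈ ℕ`, `l ≥ min(k, 1)` and `s ∈ A(𝔞_α^⊥(h₀))`, where
`𝔞_α^⊥(h₀) = {v : B(v, h₀) = 0 ∧ B(v, t_α) = 0}`. -/
noncomputable def Jalpha {n : ℕ} (B : (Fin n → ℂ) →ₗ[ℂ] (Fin n → ℂ) →ₗ[ℂ] ℂ)
    (t h₀ : Fin n → ℂ) : Submodule ℂ (MvPolynomial (Fin n) ℂ) :=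
  Submodule.span ℂ {f | ∃ (k l : ℕ) (s : MvPolynomial (Fin n) ℂ),
    min k 1 ≤ l ∧ s ∈ algOf {v : Fin n → ℂ | B v h₀ = 0 ∧ B v t = 0} ∧
    f = linPoly h₀ ^ k * linPoly t ^ l * s}

lemma linPoly_add {n : ℕ} (v w : Fin n → ℂ) : linPoly (v + w) = linPoly v + linPoly w := by
  simp [linPoly, add_mul, Finset.sum_add_distrib]

lemma linPoly_smul {n : ℕ} (c : ℂ) (v : Fin n → ℂ) : linPoly (c • v) = c • linPoly v := by
  simp [linPoly, Finset.smul_sum, MvPolynomial.smul_eq_C_mul, mul_assoc]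

lemma linPoly_single {n : ℕ} (i : Fin n) : linPoly (Pi.single i 1) = MvPolynomial.X i := by
  rw [linPoly, Finset.sum_eq_single i]
  · simp
  · intro j _ hj
    simp [hj]
  · simp

/-- The decomposition of a vector along `ℂ h ⊕ ℂ t ⊕ {h, t}^⊥`, for a hyperbolic pair `(h, t)`,
transported to linear polynomials. -/
lemma linPoly_decomp {n : ℕ} (B : (Fin n → ℂ) →ₗ[ℂ] (Fin n → ℂ) →ₗ[ℂ] ℂ) (t h : Fin n → ℂ)
    (htt : B t t = 0) (hth : B t h = 1) (hht : B h t = 1) (hhh : B h h = 0) (v : Fin n → ℂ) :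
    ∃ w : Fin n → ℂ, (B w h = 0 ∧ B w t = 0) ∧
      linPoly v = B v t • linPoly h + B v h • linPoly t + linPoly w := by
  refine ⟨v - (B v t • h + B v h • t), ⟨by simp [hhh, hth], by simp [hht, htt]⟩, ?_⟩
  rw [← linPoly_smul, ← linPoly_smul, ← linPoly_add, ← linPoly_add, add_sub_cancel]

/-- Without the condition on the exponents, the products defining `J_α(h)` span the whole
polynomial ring: their span contains `1` and is stable under multiplication by each `ℓ_v`. -/
lemma mem_span_products {n : ℕ} (B : (Fin n → ℂ) →ₗ[ℂ] (Fin n → ℂ) →ₗ[ℂ] ℂ) (t h : Fin n → ℂ)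
    (htt : B t t = 0) (hth : B t h = 1) (hht : B h t = 1) (hhh : B h h = 0)
    (f : MvPolynomial (Fin n) ℂ) :
    f ∈ Submodule.span ℂ {f | ∃ (k l : ℕ) (s : MvPolynomial (Fin n) ℂ),
      s ∈ algOf {v : Fin n → ℂ | B v h = 0 ∧ B v t = 0} ∧
      f = linPoly h ^ k * linPoly t ^ l * s} := by
  induction f using MvPolynomial.induction_on with
  | C a =>
    exact Submodule.subset_span ⟨0, 0, MvPolynomial.C a, Subalgebra.algebraMap_mem _ a, by simp⟩
  | add p q hp hq => exact add_mem hp hq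
  | mul_X p i hp =>
    obtain ⟨w, hw, hX⟩ := linPoly_decomp B t h htt hth hht hhh (Pi.single i 1)
    rw [← linPoly_single, hX]
    induction hp using Submodule.span_induction with
    | zero => simp
    | add x y _ _ hx hy =>
      rw [add_mul]
      exact add_mem hx hy
    | smul c x _ hx =>
      rw [smul_mul_assoc]
      exact Submodule.smul_mem _ c hx
    | mem x hx =>
      obtain ⟨k, l, s, hs, rfl⟩ := hx
      rw [mul_add, mul_add, mul_smul_comm, mul_smul_comm]
      refine add_mem (add_mem (Submodule.smul_mem _ _ ?_) (Submodule.smul_mem _ _ ?_)) ?_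
      · exact Submodule.subset_span ⟨k + 1, l, s, hs, by ring⟩
      · exact Submodule.subset_span ⟨k, l + 1, s, hs, by ring⟩
      · exact Submodule.subset_span ⟨k, l, s * linPoly w,
          mul_mem hs (Algebra.subset_adjoin ⟨w, hw, rfl⟩), by ring⟩

/-- Modulo `ℓ_t`, every element of `A(t^⊥)` comes from `A({h, t}^⊥)`. -/
lemma exists_of_mem_algOf_ker {n : ℕ} (B : (Fin n → ℂ) →ₗ[ℂ] (Fin n → ℂ) →ₗ[ℂ] ℂ)
    (t h : Fin n → ℂ) (htt : B t t = 0) (hth : B t h = 1) (hht : B h t = 1) (hhh : B h h = 0)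
    {f : MvPolynomial (Fin n) ℂ} (hf : f ∈ algOf {v : Fin n → ℂ | B v t = 0}) :
    ∃ s ∈ algOf {v : Fin n → ℂ | B v h = 0 ∧ B v t = 0}, ∃ g, f = s + linPoly t * g := by
  induction hf using Algebra.adjoin_induction with
  | mem x hx =>
    obtain ⟨v, hv, rfl⟩ := hx
    obtain ⟨w, hw, hvw⟩ := linPoly_decomp B t h htt hth hht hhh v
    refine ⟨linPoly w, Algebra.subset_adjoin ⟨w, hw, rfl⟩, MvPolynomial.C (B v h), ?_⟩
    rw [hvw, show B v t = 0 from hv, MvPolynomial.smul_eq_C_mul, MvPolynomial.smul_eq_C_mul]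
    simp only [map_zero]
    ring
  | algebraMap c => exact ⟨_, Subalgebra.algebraMap_mem _ c, 0, by simp⟩
  | add x y _ _ hx hy =>
    obtain ⟨a, ha, g, rfl⟩ := hx
    obtain ⟨b, hb, k, rfl⟩ := hy
    exact ⟨a + b, add_mem ha hb, g + k, by ring⟩
  | mul x y _ _ hx hy =>
    obtain ⟨a, ha, g, rfl⟩ := hx
    obtain ⟨b, hb, k, rfl⟩ := hy
    exact ⟨a * b, mul_mem ha hb, a * k + g * b + linPoly t * g * k, by ring⟩

/-- `J_α(h₀) = A(ker α) + ℓ_{t_α}·ℂ[X₁, …, Xₙ]`; in particular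
`J_α(h₀)` admits a description independent of `h₀`. -/
theorem Jalpha_eq_kernel_description (n : ℕ) (hn : 1 ≤ n)
    (B : (Fin n → ℂ) →ₗ[ℂ] (Fin n → ℂ) →ₗ[ℂ] ℂ)
    (hBsymm : ∀ v w : Fin n → ℂ, B v w = B w v)
    (hBnondeg : ∀ v : Fin n → ℂ, (∀ w : Fin n → ℂ, B v w = 0) → v = 0)
    (α : (Fin n → ℂ) →ₗ[ℂ] ℂ) (hα : α ≠ 0)
    (t : Fin n → ℂ) (ht : ∀ v : Fin n → ℂ, B t v = α v) (hiso : α t = 0)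
    (h₀ : Fin n → ℂ) (hh₀1 : α h₀ = 1) (hh₀2 : B h₀ h₀ = 0) :
    (Jalpha B t h₀ : Set (MvPolynomial (Fin n) ℂ))
      = {f | ∃ a ∈ algOf (LinearMap.ker α : Set (Fin n → ℂ)),
          ∃ g : MvPolynomial (Fin n) ℂ, f = a + linPoly t * g} := by
  have hBt (v : Fin n → ℂ) : B v t = α v := by rw [hBsymm, ht]
  have htt : B t t = 0 := by rw [ht, hiso]
  have hth : B t h₀ = 1 := by rw [ht, hh₀1]
  have hht : B h₀ t = 1 := by rw [hBt, hh₀1]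
  have hker : (LinearMap.ker α : Set (Fin n → ℂ)) = {v | B v t = 0} := by
    ext v
    simp [hBt]
  rw [hker]
  ext f
  simp only [SetLike.mem_coe, Set.mem_ofPred_eq]
  constructor
  · intro hf
    induction hf using Submodule.span_induction with
    | zero => exact ⟨0, zero_mem _, 0, by simp⟩
    | add x y _ _ hx hy =>
      obtain ⟨a, ha, g, rfl⟩ := hx
      obtain ⟨b, hb, k, rfl⟩ := hy
      exact ⟨a + b, add_mem ha hb, g + k, by ring⟩
    | smul c x _ hx =>
      obtain ⟨a, ha, g, rfl⟩ := hx
      exact ⟨c • a, Subalgebra.smul_mem _ ha c, c • g, by rw [smul_add, mul_smul_comm]⟩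
    | mem x hx =>
      obtain ⟨k, l, s, hkl, hs, rfl⟩ := hx
      rcases l with _ | l
      · obtain rfl : k = 0 := by omega
        refine ⟨s, Algebra.adjoin_mono (Set.image_mono fun v hv => hv.2) hs, 0, by simp⟩
      · exact ⟨0, zero_mem _, linPoly h₀ ^ k * linPoly t ^ l * s, by ring⟩
  · rintro ⟨a, ha, g, rfl⟩
    obtain ⟨s, hs, g', rfl⟩ := exists_of_mem_algOf_ker B t h₀ htt hth hht hh₀2 ha
    have key (p : MvPolynomial (Fin n) ℂ) : linPoly t * p ∈ Jalpha B t h₀ := by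
      have hp := mem_span_products B t h₀ htt hth hht hh₀2 p
      induction hp using Submodule.span_induction with
      | zero => simp
      | add x y _ _ hx hy =>
        rw [mul_add]
        exact add_mem hx hy
      | smul c x _ hx =>
        rw [mul_smul_comm]
        exact Submodule.smul_mem _ c hx
      | mem x hx =>
        obtain ⟨k, l, s, hs, rfl⟩ := hx
        exact Submodule.subset_span ⟨k, l + 1, s, by omega, hs, by ring⟩
    exact add_mem (add_mem (Submodule.subset_span ⟨0, 0, s, by simp, hs, by simp⟩) (key g')) (key g)
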